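/- Consider a star-shaped compact network N_R with I ≥ 2 rays identified with [0,R] and glued at the junction x = 0, and fix T, K > 0. Under assumption (H) on the data 𝔇 (in particular a_i ≥ a̲ > 0, α_i ≥ α̲ > 0 and r ≥ 0), let u = (u_i) and v = (v_i) belong to the class 𝔠^{1,2,0}_{0}(Ω_T), with u a super-solution and v a sub-solution of the local-time Kirchhoff system, and suppose u_i(0,x,l) ≥ v_i(0,x,l) and u_i(t,x,K) ≥ v_i(t,x,K) for all i ∈ {1,…,I}, t ∈ [0,T], x ∈ [0,R], l ∈ [0,K]. Then u_i(t,x,l) ≥ v_i(t,x,l) for all i ∈ {1,…,I}, (t,x,l) ∈ [0,T]×[0,R]×[0,K]. -/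

import Mathlib

open Set

/-- Bounded Lipschitz (`W^{1,∞}`) condition on `{1,…,I}×[0,T]×[0,R]×[0,K]`. -/
def LB3 (I : ℕ) (T R K : ℝ) (h : Fin I → ℝ → ℝ → ℝ → ℝ) : Prop :=
  ∃ C, ∀ i : Fin I, ∀ t ∈ Icc (0:ℝ) T, ∀ s ∈ Icc (0:ℝ) T, ∀ x ∈ Icc (0:ℝ) R,
    ∀ y ∈ Icc (0:ℝ) R, ∀ l ∈ Icc (0:ℝ) K, ∀ m ∈ Icc (0:ℝ) K,
      |h i t x l| ≤ C ∧ |h i t x l - h i s y m| ≤ C * (|t - s| + |x - y| + |l - m|)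

/-- Bounded Lipschitz (`W^{1,∞}`) condition on `[0,T]×[0,K]`. -/
def LB2 (T K : ℝ) (h : ℝ → ℝ → ℝ) : Prop :=
  ∃ C, ∀ t ∈ Icc (0:ℝ) T, ∀ s ∈ Icc (0:ℝ) T, ∀ l ∈ Icc (0:ℝ) K, ∀ m ∈ Icc (0:ℝ) K,
    |h t l| ≤ C ∧ |h t l - h s m| ≤ C * (|t - s| + |l - m|)

/-- Bounded Lipschitz (`W^{1,∞}`) condition on `{1,…,I}×[0,T]×[0,K]`. -/
def LB2I (I : ℕ) (T K : ℝ) (h : Fin I → ℝ → ℝ → ℝ) : Prop :=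
  ∃ C, ∀ i : Fin I, ∀ t ∈ Icc (0:ℝ) T, ∀ s ∈ Icc (0:ℝ) T, ∀ l ∈ Icc (0:ℝ) K,
    ∀ m ∈ Icc (0:ℝ) K, |h i t l| ≤ C ∧ |h i t l - h i s m| ≤ C * (|t - s| + |l - m|)

/-- Membership in the class `𝔠^{1,2,0}_{0}(Ω_T)` for a family `w = (w_i)` on the
star-shaped network, with time derivative `wt`, space derivatives `wx`, `wxx` on the rays
and `l`-derivative `w0l` of the junction value `(t,l) ↦ w(t,0,l)`:
(i) junction continuity; (ii) `w_i` and `∂ₓw_i` continuous on `[0,T]×[0,R]×[0,K)`;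
(iii) `w_i ∈ C^{1,2}` in `(t,x)` on `(0,T)×(0,R)×(0,K)` with `∂ₜw_i, ∂ₓ²w_i` bounded;
(iv) `(t,l) ↦ w(t,0,l)` continuously differentiable in `l` on `[0,T]×[0,K)`. -/
def InClassC120 (I : ℕ) (T R K : ℝ)
    (w wt wx wxx : Fin I → ℝ → ℝ → ℝ → ℝ) (w0l : ℝ → ℝ → ℝ) : Prop :=
  -- (i) junction continuity
  (∀ i j : Fin I, ∀ t ∈ Icc (0:ℝ) T, ∀ l ∈ Icc (0:ℝ) K, w i t 0 l = w j t 0 l) ∧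
  -- (ii) continuity of w and of its space derivative up to the boundary
  (∀ i, ContinuousOn (fun p : ℝ × ℝ × ℝ => w i p.1 p.2.1 p.2.2)
      (Icc 0 T ×ˢ Icc 0 R ×ˢ Icc 0 K)) ∧
  (∀ i, ∀ t ∈ Icc (0:ℝ) T, ∀ x ∈ Icc (0:ℝ) R, ∀ l ∈ Ico (0:ℝ) K,
      HasDerivWithinAt (fun y => w i t y l) (wx i t x l) (Icc 0 R) x) ∧
  (∀ i, ContinuousOn (fun p : ℝ × ℝ × ℝ => wx i p.1 p.2.1 p.2.2)
      (Icc 0 T ×ˢ Icc 0 R ×ˢ Ico 0 K)) ∧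
  -- (iii) C^{1,2} regularity in (t,x) in the interior, with bounded ∂ₜw, ∂ₓ²w
  (∀ i, ∀ t ∈ Ioo (0:ℝ) T, ∀ x ∈ Ioo (0:ℝ) R, ∀ l ∈ Ioo (0:ℝ) K,
      HasDerivAt (fun s => w i s x l) (wt i t x l) t ∧
      HasDerivAt (fun y => wx i t y l) (wxx i t x l) x) ∧
  (∀ i, ContinuousOn (fun p : ℝ × ℝ × ℝ => wt i p.1 p.2.1 p.2.2)
      (Ioo 0 T ×ˢ Ioo 0 R ×ˢ Ioo 0 K)) ∧
  (∀ i, ContinuousOn (fun p : ℝ × ℝ × ℝ => wxx i p.1 p.2.1 p.2.2)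
      (Ioo 0 T ×ˢ Ioo 0 R ×ˢ Ioo 0 K)) ∧
  (∀ i, ∃ C, ∀ t ∈ Ioo (0:ℝ) T, ∀ x ∈ Ioo (0:ℝ) R, ∀ l ∈ Ioo (0:ℝ) K,
      |wt i t x l| ≤ C ∧ |wxx i t x l| ≤ C) ∧
  -- (iv) l-differentiability of the junction value
  (∀ i : Fin I, ∀ t ∈ Icc (0:ℝ) T, ∀ l ∈ Ico (0:ℝ) K,
      HasDerivWithinAt (fun m => w i t 0 m) (w0l t l) (Ico 0 K) l) ∧
  ContinuousOn (fun p : ℝ × ℝ => w0l p.1 p.2) (Icc 0 T ×ˢ Ico 0 K)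

/-- Super solution (Definition 2.7) of the local-time Kirchhoff parabolic system. -/
def SuperSol (I : ℕ) (T R K : ℝ)
    (a b c f : Fin I → ℝ → ℝ → ℝ → ℝ) (αc : Fin I → ℝ → ℝ → ℝ) (r φc : ℝ → ℝ → ℝ)
    (w wt wx wxx : Fin I → ℝ → ℝ → ℝ → ℝ) (w0l : ℝ → ℝ → ℝ) : Prop :=
  (∀ i, ∀ t ∈ Ioo (0:ℝ) T, ∀ x ∈ Ioo (0:ℝ) R, ∀ l ∈ Ioo (0:ℝ) K,
      0 ≤ wt i t x l - a i t x l * wxx i t x l + b i t x l * wx i t x l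
        + c i t x l * w i t x l - f i t x l) ∧
  (∀ i : Fin I, ∀ t ∈ Ioo (0:ℝ) T, ∀ l ∈ Ioo (0:ℝ) K,
      w0l t l + (∑ j, αc j t l * wx j t 0 l) - r t l * w i t 0 l - φc t l ≤ 0) ∧
  (∀ i, ∀ t ∈ Ioo (0:ℝ) T, ∀ l ∈ Ioo (0:ℝ) K, 0 ≤ wx i t R l)

/-- Sub solution (Definition 2.7) of the local-time Kirchhoff parabolic system. -/
def SubSol (I : ℕ) (T R K : ℝ)
    (a b c f : Fin I → ℝ → ℝ → ℝ → ℝ) (αc : Fin I → ℝ → ℝ → ℝ) (r φc : ℝ → ℝ → ℝ)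
    (w wt wx wxx : Fin I → ℝ → ℝ → ℝ → ℝ) (w0l : ℝ → ℝ → ℝ) : Prop :=
  (∀ i, ∀ t ∈ Ioo (0:ℝ) T, ∀ x ∈ Ioo (0:ℝ) R, ∀ l ∈ Ioo (0:ℝ) K,
      wt i t x l - a i t x l * wxx i t x l + b i t x l * wx i t x l
        + c i t x l * w i t x l - f i t x l ≤ 0) ∧
  (∀ i : Fin I, ∀ t ∈ Ioo (0:ℝ) T, ∀ l ∈ Ioo (0:ℝ) K,
      0 ≤ w0l t l + (∑ j, αc j t l * wx j t 0 l) - r t l * w i t 0 l - φc t l) ∧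
  (∀ i, ∀ t ∈ Ioo (0:ℝ) T, ∀ l ∈ Ioo (0:ℝ) K, wx i t R l ≤ 0)

/-!
Write `w = v - u`, a subsolution of the homogeneous system, and compare it with the strict
supersolution `ψ(t, x, l) = exp(ρt) (x² + (K - l) + M)`, with `ρ` and `M > 0` large. If `w` were
positive at some `(t₀, x₀, l₀)`, the maximum `s > 0` of `w / ψ` over `[0,t₀] × [0,R] × [l₀,K]` would
make `s ψ - w` a nonnegative strict supersolution vanishing at a point off `{t = 0} ∪ {l = K}`. This
is impossible, by looking at the signs of the derivatives at that minimum, be it at the junction, in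
the interior of a ray or at its far end. As `∂ₓψ` vanishes at the junction, strictness there comes
from the term `K - l`; at the far end it comes from `x²`.
-/

section Calculus

lemma sub_mul_nonneg_of_isMinOn {f : ℝ → ℝ} {d x y : ℝ} {s : Set ℝ} (hs : Convex ℝ s)
    (hx : x ∈ s) (hy : y ∈ s) (hmin : IsMinOn f s x) (hf : HasDerivWithinAt f d s x) :
    0 ≤ (y - x) * d := by
  simpa using hmin.localize.hasFDerivWithinAt_nonneg hf.hasFDerivWithinAt
    (sub_mem_posTangentConeAt_of_segment_subset (hs.segment_subset hx hy))

lemma deriv_deriv_nonneg_of_isLocalMin {f : ℝ → ℝ} {x : ℝ} (hmin : IsLocalMin f x)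
    (hf : ContinuousAt f x) : 0 ≤ deriv (deriv f) x := by
  by_contra! hneg
  have hmax : IsLocalMax f x := isLocalMax_of_deriv_deriv_neg hneg hmin.deriv_eq_zero hf
  have hconst : f =ᶠ[nhds x] fun _ => f x := by
    filter_upwards [hmin, hmax] with y hge hle using le_antisymm hle hge
  have hzero : deriv (deriv f) x = 0 := by simpa using hconst.deriv.deriv_eq
  exact hneg.ne hzero

end Calculus

lemma exists_forall_le_of_isCompact {ι X α : Type*} [Finite ι] [Nonempty ι] [TopologicalSpace X]
    [LinearOrder α] [TopologicalSpace α] [ClosedIciTopology α] {s : Set X} (hs : IsCompact s)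
    (hne : s.Nonempty) {f : ι → X → α} (hf : ∀ i, ContinuousOn (f i) s) :
    ∃ i, ∃ p ∈ s, ∀ j, ∀ q ∈ s, f j q ≤ f i p := by
  choose p hp hmax using fun i => hs.exists_isMaxOn hne (hf i)
  obtain ⟨i, hi⟩ := Finite.exists_max fun i => f i (p i)
  exact ⟨i, p i, hp i, fun j q hq => (hmax j hq).trans (hi j)⟩

/-- The part of the class `𝔠^{1,2,0}_{0}(Ω_T)` that enters the comparison principle: `w` is
continuous on the closed domain and single-valued at the junction, and `wt`, `wx`, `wxx`, `w0l` are
its derivatives (with `w0l` the `l`-derivative of the junction value) for `t` and `l` in the open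
intervals. -/
structure HasNetworkDerivs {ι : Type*} (T R K : ℝ) (w wt wx wxx : ι → ℝ → ℝ → ℝ → ℝ)
    (w0l : ℝ → ℝ → ℝ) : Prop where
  junction_eq : ∀ i j, ∀ t ∈ Ioo 0 T, ∀ l ∈ Ioo 0 K, w i t 0 l = w j t 0 l
  continuousOn : ∀ i, ContinuousOn (fun p : ℝ × ℝ × ℝ => w i p.1 p.2.1 p.2.2)
    (Icc 0 T ×ˢ Icc 0 R ×ˢ Icc 0 K)
  hasDerivAt_t : ∀ i, ∀ t ∈ Ioo 0 T, ∀ x ∈ Ioo 0 R, ∀ l ∈ Ioo 0 K,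
    HasDerivAt (fun s => w i s x l) (wt i t x l) t
  hasDerivWithinAt_x : ∀ i, ∀ t ∈ Ioo 0 T, ∀ x ∈ Icc 0 R, ∀ l ∈ Ioo 0 K,
    HasDerivWithinAt (fun y => w i t y l) (wx i t x l) (Icc 0 R) x
  hasDerivAt_xx : ∀ i, ∀ t ∈ Ioo 0 T, ∀ x ∈ Ioo 0 R, ∀ l ∈ Ioo 0 K,
    HasDerivAt (fun y => wx i t y l) (wxx i t x l) x
  hasDerivAt_l : ∀ i, ∀ t ∈ Ioo 0 T, ∀ l ∈ Ioo 0 K,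
    HasDerivAt (fun m => w i t 0 m) (w0l t l) l

/-- Strict supersolution of the homogeneous (`f = 0`, `φ = 0`) local-time Kirchhoff system: all
three inequalities are strict. -/
structure StrictSuperSol (I : ℕ) (T R K : ℝ) (a b c : Fin I → ℝ → ℝ → ℝ → ℝ)
    (αc : Fin I → ℝ → ℝ → ℝ) (r : ℝ → ℝ → ℝ) (w wt wx wxx : Fin I → ℝ → ℝ → ℝ → ℝ)
    (w0l : ℝ → ℝ → ℝ) : Prop where
  interior : ∀ i, ∀ t ∈ Ioo 0 T, ∀ x ∈ Ioo 0 R, ∀ l ∈ Ioo 0 K,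
    0 < wt i t x l - a i t x l * wxx i t x l + b i t x l * wx i t x l + c i t x l * w i t x l
  junction : ∀ i, ∀ t ∈ Ioo 0 T, ∀ l ∈ Ioo 0 K,
    w0l t l + (∑ j, αc j t l * wx j t 0 l) - r t l * w i t 0 l < 0
  endpoint : ∀ i, ∀ t ∈ Ioo 0 T, ∀ l ∈ Ioo 0 K, 0 < wx i t R l

namespace HasNetworkDerivs

variable {ι : Type*} {T R K t x l : ℝ} {i : ι} {w wt wx wxx v vt vx vxx : ι → ℝ → ℝ → ℝ → ℝ}
  {w0l v0l : ℝ → ℝ → ℝ}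

lemma sub (hw : HasNetworkDerivs T R K w wt wx wxx w0l)
    (hv : HasNetworkDerivs T R K v vt vx vxx v0l) :
    HasNetworkDerivs T R K (w - v) (wt - vt) (wx - vx) (wxx - vxx) (w0l - v0l) where
  junction_eq i j t ht l hl :=
    congrArg₂ (· - ·) (hw.junction_eq i j t ht l hl) (hv.junction_eq i j t ht l hl)
  continuousOn i := (hw.continuousOn i).sub (hv.continuousOn i)
  hasDerivAt_t i t ht x hx l hl :=
    (hw.hasDerivAt_t i t ht x hx l hl).sub (hv.hasDerivAt_t i t ht x hx l hl)
  hasDerivWithinAt_x i t ht x hx l hl :=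
    (hw.hasDerivWithinAt_x i t ht x hx l hl).sub (hv.hasDerivWithinAt_x i t ht x hx l hl)
  hasDerivAt_xx i t ht x hx l hl :=
    (hw.hasDerivAt_xx i t ht x hx l hl).sub (hv.hasDerivAt_xx i t ht x hx l hl)
  hasDerivAt_l i t ht l hl := (hw.hasDerivAt_l i t ht l hl).sub (hv.hasDerivAt_l i t ht l hl)

lemma const_smul (s : ℝ) (hw : HasNetworkDerivs T R K w wt wx wxx w0l) :
    HasNetworkDerivs T R K (s • w) (s • wt) (s • wx) (s • wxx) (s • w0l) where
  junction_eq i j t ht l hl := congrArg (s * ·) (hw.junction_eq i j t ht l hl)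
  continuousOn i := (hw.continuousOn i).const_smul s
  hasDerivAt_t i t ht x hx l hl := (hw.hasDerivAt_t i t ht x hx l hl).const_mul s
  hasDerivWithinAt_x i t ht x hx l hl := (hw.hasDerivWithinAt_x i t ht x hx l hl).const_mul s
  hasDerivAt_xx i t ht x hx l hl := (hw.hasDerivAt_xx i t ht x hx l hl).const_mul s
  hasDerivAt_l i t ht l hl := (hw.hasDerivAt_l i t ht l hl).const_mul s

lemma dt_nonpos_of_isMinOn (hw : HasNetworkDerivs T R K w wt wx wxx w0l) (ht : t ∈ Ioo 0 T)
    (hx : x ∈ Ioo 0 R) (hl : l ∈ Ioo 0 K) (hmin : IsMinOn (fun s => w i s x l) (Icc 0 t) t) :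
    wt i t x l ≤ 0 := by
  have := sub_mul_nonneg_of_isMinOn (convex_Icc 0 t) (right_mem_Icc.2 ht.1.le)
    (left_mem_Icc.2 ht.1.le) hmin (hw.hasDerivAt_t i t ht x hx l hl).hasDerivWithinAt
  nlinarith [ht.1]

lemma dx_eq_zero_and_dxx_nonneg_of_isMinOn (hw : HasNetworkDerivs T R K w wt wx wxx w0l)
    (ht : t ∈ Ioo 0 T) (hx : x ∈ Ioo 0 R) (hl : l ∈ Ioo 0 K)
    (hmin : IsMinOn (fun y => w i t y l) (Icc 0 R) x) :
    wx i t x l = 0 ∧ 0 ≤ wxx i t x l := by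
  have hderiv : ∀ y ∈ Ioo 0 R, HasDerivAt (fun y => w i t y l) (wx i t y l) y := fun y hy =>
    (hw.hasDerivWithinAt_x i t ht y (Ioo_subset_Icc_self hy) l hl).hasDerivAt
      (Icc_mem_nhds hy.1 hy.2)
  have hlocal : IsLocalMin (fun y => w i t y l) x := hmin.isLocalMin (Icc_mem_nhds hx.1 hx.2)
  have hderiv_eq : deriv (fun y => w i t y l) =ᶠ[nhds x] fun y => wx i t y l := by
    filter_upwards [Ioo_mem_nhds hx.1 hx.2] with y hy using (hderiv y hy).deriv
  refine ⟨hlocal.hasDerivAt_eq_zero (hderiv x hx), ?_⟩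
  rw [← (hw.hasDerivAt_xx i t ht x hx l hl).deriv, ← hderiv_eq.deriv_eq]
  exact deriv_deriv_nonneg_of_isLocalMin hlocal (hderiv x hx).continuousAt

lemma dx_zero_nonneg_of_isMinOn (hR : 0 < R) (hw : HasNetworkDerivs T R K w wt wx wxx w0l)
    (ht : t ∈ Ioo 0 T) (hl : l ∈ Ioo 0 K) (hmin : IsMinOn (fun y => w i t y l) (Icc 0 R) 0) :
    0 ≤ wx i t 0 l := by
  have hzero : (0 : ℝ) ∈ Icc 0 R := left_mem_Icc.2 hR.le
  have := sub_mul_nonneg_of_isMinOn (convex_Icc 0 R) hzero (right_mem_Icc.2 hR.le) hmin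
    (hw.hasDerivWithinAt_x i t ht 0 hzero l hl)
  nlinarith

lemma dx_right_nonpos_of_isMinOn (hR : 0 < R) (hw : HasNetworkDerivs T R K w wt wx wxx w0l)
    (ht : t ∈ Ioo 0 T) (hl : l ∈ Ioo 0 K) (hmin : IsMinOn (fun y => w i t y l) (Icc 0 R) R) :
    wx i t R l ≤ 0 := by
  have hright : R ∈ Icc 0 R := right_mem_Icc.2 hR.le
  have := sub_mul_nonneg_of_isMinOn (convex_Icc 0 R) hright (left_mem_Icc.2 hR.le) hmin
    (hw.hasDerivWithinAt_x i t ht R hright l hl)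
  nlinarith

lemma dl_nonneg_of_isMinOn (hw : HasNetworkDerivs T R K w wt wx wxx w0l) (i : ι)
    (ht : t ∈ Ioo 0 T) (hl : l ∈ Ioo 0 K) (hmin : IsMinOn (fun m => w i t 0 m) (Icc l K) l) :
    0 ≤ w0l t l := by
  have := sub_mul_nonneg_of_isMinOn (convex_Icc l K) (left_mem_Icc.2 hl.2.le)
    (right_mem_Icc.2 hl.2.le) hmin (hw.hasDerivAt_l i t ht l hl).hasDerivWithinAt
  nlinarith [hl.2]

end HasNetworkDerivs

lemma InClassC120.hasNetworkDerivs {I : ℕ} {T R K : ℝ} {w wt wx wxx : Fin I → ℝ → ℝ → ℝ → ℝ}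
    {w0l : ℝ → ℝ → ℝ} (hw : InClassC120 I T R K w wt wx wxx w0l) :
    HasNetworkDerivs T R K w wt wx wxx w0l := by
  obtain ⟨hjunction, hcont, hdx, -, hdt, -, -, -, hdl, -⟩ := hw
  exact
    { junction_eq := fun i j t ht l hl =>
        hjunction i j t (Ioo_subset_Icc_self ht) l (Ioo_subset_Icc_self hl)
      continuousOn := hcont
      hasDerivAt_t := fun i t ht x hx l hl => (hdt i t ht x hx l hl).1
      hasDerivWithinAt_x := fun i t ht x hx l hl =>
        hdx i t (Ioo_subset_Icc_self ht) x hx l (Ioo_subset_Ico_self hl)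
      hasDerivAt_xx := fun i t ht x hx l hl => (hdt i t ht x hx l hl).2
      hasDerivAt_l := fun i t ht l hl =>
        (hdl i t (Ioo_subset_Icc_self ht) l (Ioo_subset_Ico_self hl)).hasDerivAt
          (Ico_mem_nhds hl.1 hl.2) }

lemma LB3.exists_abs_le {I : ℕ} {T R K : ℝ} {h : Fin I → ℝ → ℝ → ℝ → ℝ} (hh : LB3 I T R K h) :
    ∃ C, ∀ i, ∀ t ∈ Ioo 0 T, ∀ x ∈ Ioo 0 R, ∀ l ∈ Ioo 0 K, |h i t x l| ≤ C := by
  obtain ⟨C, hC⟩ := hh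
  refine ⟨C, fun i t ht x hx l hl => ?_⟩
  have ht := Ioo_subset_Icc_self ht
  have hx := Ioo_subset_Icc_self hx
  have hl := Ioo_subset_Icc_self hl
  exact (hC i t ht t ht x hx x hx l hl l hl).1

section Comparison

variable {I : ℕ} {T R K : ℝ} {a b c f : Fin I → ℝ → ℝ → ℝ → ℝ} {αc : Fin I → ℝ → ℝ → ℝ}
  {r φc : ℝ → ℝ → ℝ} {u ut ux uxx v vt vx vxx w wt wx wxx ψ ψt ψx ψxx : Fin I → ℝ → ℝ → ℝ → ℝ}
  {u0l v0l w0l ψ0l : ℝ → ℝ → ℝ}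

lemma SubSol.sub_superSol (hv : SubSol I T R K a b c f αc r φc v vt vx vxx v0l)
    (hu : SuperSol I T R K a b c f αc r φc u ut ux uxx u0l) :
    SubSol I T R K a b c 0 αc r 0 (v - u) (vt - ut) (vx - ux) (vxx - uxx) (v0l - u0l) := by
  refine ⟨fun i t ht x hx l hl => ?_, fun i t ht l hl => ?_, fun i t ht l hl => ?_⟩
  · simp only [Pi.sub_apply, Pi.zero_apply]
    linear_combination hv.1 i t ht x hx l hl + hu.1 i t ht x hx l hl
  · simp only [Pi.sub_apply, Pi.zero_apply, mul_sub, Finset.sum_sub_distrib]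
    linear_combination hv.2.1 i t ht l hl + hu.2.1 i t ht l hl
  · exact sub_nonpos.2 ((hv.2.2 i t ht l hl).trans (hu.2.2 i t ht l hl))

lemma StrictSuperSol.smul_sub_subSol {s : ℝ} (hs : 0 < s)
    (hψ : StrictSuperSol I T R K a b c αc r ψ ψt ψx ψxx ψ0l)
    (hw : SubSol I T R K a b c 0 αc r 0 w wt wx wxx w0l) :
    StrictSuperSol I T R K a b c αc r (s • ψ - w) (s • ψt - wt) (s • ψx - wx) (s • ψxx - wxx)
      (s • ψ0l - w0l) where
  interior i t ht x hx l hl := by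
    have hw := hw.1 i t ht x hx l hl
    simp only [Pi.sub_apply, Pi.smul_apply, Pi.zero_apply, smul_eq_mul] at hw ⊢
    linear_combination s * hψ.interior i t ht x hx l hl + hw
  junction i t ht l hl := by
    have hw := hw.2.1 i t ht l hl
    simp only [Pi.sub_apply, Pi.smul_apply, Pi.zero_apply, smul_eq_mul, mul_sub,
      Finset.sum_sub_distrib, mul_left_comm _ s, ← Finset.mul_sum] at hw ⊢
    linear_combination s * hψ.junction i t ht l hl + hw
  endpoint i t ht l hl :=
    sub_pos.2 ((hw.2.2 i t ht l hl).trans_lt (mul_pos hs (hψ.endpoint i t ht l hl)))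

theorem StrictSuperSol.ne_zero_of_nonneg {i : Fin I} {t x l : ℝ} (hR : 0 < R)
    (ha : ∀ i, ∀ t ∈ Ioo 0 T, ∀ x ∈ Ioo 0 R, ∀ l ∈ Ioo 0 K, 0 ≤ a i t x l)
    (hα : ∀ i, ∀ t ∈ Ioo 0 T, ∀ l ∈ Ioo 0 K, 0 ≤ αc i t l)
    (hw : StrictSuperSol I T R K a b c αc r w wt wx wxx w0l)
    (hderiv : HasNetworkDerivs T R K w wt wx wxx w0l)
    (ht : t ∈ Ioo 0 T) (hx : x ∈ Icc 0 R) (hl : l ∈ Ioo 0 K)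
    (hnonneg : ∀ j, ∀ s ∈ Icc 0 t, ∀ y ∈ Icc 0 R, ∀ m ∈ Icc l K, 0 ≤ w j s y m) :
    w i t x l ≠ 0 := by
  intro hzero
  have htt : t ∈ Icc 0 t := right_mem_Icc.2 ht.1.le
  have hll : l ∈ Icc l K := left_mem_Icc.2 hl.2.le
  have hmin_x : ∀ j, w j t x l = 0 → IsMinOn (fun y => w j t y l) (Icc 0 R) x :=
    fun j hj y hy => hj.trans_le (hnonneg j t htt y hy l hll)
  rcases hx.1.eq_or_lt with rfl | hx_pos
  · have hw0l : 0 ≤ w0l t l := hderiv.dl_nonneg_of_isMinOn i ht hl fun m hm =>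
      hzero.trans_le (hnonneg i t htt 0 hx m hm)
    have hwx : ∀ j, 0 ≤ wx j t 0 l := fun j =>
      hderiv.dx_zero_nonneg_of_isMinOn hR ht hl
        (hmin_x j ((hderiv.junction_eq j i t ht l hl).trans hzero))
    have hsum : 0 ≤ ∑ j, αc j t l * wx j t 0 l :=
      Finset.sum_nonneg fun j _ => mul_nonneg (hα j t ht l hl) (hwx j)
    have hjunction := hw.junction i t ht l hl
    rw [hzero] at hjunction
    linarith
  rcases hx.2.eq_or_lt with rfl | hx_lt
  · exact (hw.endpoint i t ht l hl).not_ge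
      (hderiv.dx_right_nonpos_of_isMinOn hR ht hl (hmin_x i hzero))
  · have hxo : x ∈ Ioo 0 R := ⟨hx_pos, hx_lt⟩
    have hwt : wt i t x l ≤ 0 := hderiv.dt_nonpos_of_isMinOn ht hxo hl fun s hs =>
      hzero.trans_le (hnonneg i s hs x hx l hll)
    obtain ⟨hwx, hwxx⟩ :=
      hderiv.dx_eq_zero_and_dxx_nonneg_of_isMinOn ht hxo hl (hmin_x i hzero)
    have hinterior := hw.interior i t ht x hxo l hl
    rw [hzero, hwx] at hinterior
    linarith [mul_nonneg (ha i t ht x hxo l hl) hwxx]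

theorem SubSol.nonpos_of_strictSuperSol (hR : 0 < R)
    (ha : ∀ i, ∀ t ∈ Ioo 0 T, ∀ x ∈ Ioo 0 R, ∀ l ∈ Ioo 0 K, 0 ≤ a i t x l)
    (hα : ∀ i, ∀ t ∈ Ioo 0 T, ∀ l ∈ Ioo 0 K, 0 ≤ αc i t l)
    (hw : SubSol I T R K a b c 0 αc r 0 w wt wx wxx w0l)
    (hw_deriv : HasNetworkDerivs T R K w wt wx wxx w0l)
    (hψ : StrictSuperSol I T R K a b c αc r ψ ψt ψx ψxx ψ0l)
    (hψ_deriv : HasNetworkDerivs T R K ψ ψt ψx ψxx ψ0l)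
    (hψ_pos : ∀ i, ∀ t ∈ Icc 0 T, ∀ x ∈ Icc 0 R, ∀ l ∈ Icc 0 K, 0 < ψ i t x l)
    (hinit : ∀ i, ∀ x ∈ Icc 0 R, ∀ l ∈ Icc 0 K, w i 0 x l ≤ 0)
    (hterm : ∀ i, ∀ t ∈ Icc 0 T, ∀ x ∈ Icc 0 R, w i t x K ≤ 0) :
    ∀ i, ∀ t ∈ Ioo 0 T, ∀ x ∈ Icc 0 R, ∀ l ∈ Ioo 0 K, w i t x l ≤ 0 := by
  intro i₀ t₀ ht₀ x₀ hx₀ l₀ hl₀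
  by_contra! hpos
  have htT : Icc 0 t₀ ⊆ Icc 0 T := Icc_subset_Icc_right ht₀.2.le
  have hlK : Icc l₀ K ⊆ Icc 0 K := Icc_subset_Icc_left hl₀.1.le
  have : Nonempty (Fin I) := ⟨i₀⟩
  have hbox₀ : (t₀, x₀, l₀) ∈ Icc 0 t₀ ×ˢ Icc 0 R ×ˢ Icc l₀ K :=
    ⟨right_mem_Icc.2 ht₀.1.le, hx₀, left_mem_Icc.2 hl₀.2.le⟩
  obtain ⟨i, ⟨t, x, l⟩, ⟨ht, hx, hl⟩, hmax⟩ := exists_forall_le_of_isCompact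
    (isCompact_Icc.prod (isCompact_Icc.prod isCompact_Icc)) ⟨_, hbox₀⟩ fun i =>
      ((hw_deriv.continuousOn i).div (hψ_deriv.continuousOn i) fun p hp =>
        (hψ_pos i p.1 hp.1 p.2.1 hp.2.1 p.2.2 hp.2.2).ne').mono
          (prod_mono htT (prod_mono_right hlK))
  have hψp : 0 < ψ i t x l := hψ_pos i t (htT ht) x hx l (hlK hl)
  obtain ⟨s, hs_eq⟩ : ∃ s, s = w i t x l / ψ i t x l := ⟨_, rfl⟩
  have hs : 0 < s := hs_eq ▸ (div_pos hpos
    (hψ_pos i₀ t₀ (htT hbox₀.1) x₀ hx₀ l₀ (hlK hbox₀.2.2))).trans_le (hmax i₀ _ hbox₀)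
  have hs_mul : s * ψ i t x l = w i t x l := by rw [hs_eq, div_mul_cancel₀ _ hψp.ne']
  have hwp : 0 < w i t x l := hs_mul ▸ mul_pos hs hψp
  have ht_pos : 0 < t := ht.1.lt_of_ne' (by rintro rfl; exact hwp.not_ge (hinit i x hx l (hlK hl)))
  have hl_lt : l < K := hl.2.lt_of_ne (by rintro rfl; exact hwp.not_ge (hterm i t (htT ht) x hx))
  refine (hψ.smul_sub_subSol hs hw).ne_zero_of_nonneg hR ha hα
    ((hψ_deriv.const_smul s).sub hw_deriv) (i := i) ⟨ht_pos, ht.2.trans_lt ht₀.2⟩ hx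
    ⟨hl₀.1.trans_le hl.1, hl_lt⟩ (fun j τ hτ y hy m hm => ?_) (sub_eq_zero.2 hs_mul)
  have hτ₀ : τ ∈ Icc 0 t₀ := Icc_subset_Icc_right ht.2 hτ
  have hm₀ : m ∈ Icc l₀ K := Icc_subset_Icc_left hl.1 hm
  have hψq : 0 < ψ j τ y m := hψ_pos j τ (htT hτ₀) y hy m (hlK hm₀)
  exact sub_nonneg.2 ((div_le_iff₀ hψq).1 ((hmax j (τ, y, m) ⟨hτ₀, hy, hm₀⟩).trans_eq hs_eq.symm))

end Comparison

/-- The common value `exp(ρt) (x² + (K - l) + M)` on all rays of the strict supersolution against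
which subsolutions are compared. -/
noncomputable def barrier (K ρ M t x l : ℝ) : ℝ :=
  Real.exp (ρ * t) * (x ^ 2 + (K - l) + M)

lemma barrier_pos {K ρ M t x l : ℝ} (hM : 0 < M) (hl : l ≤ K) : 0 < barrier K ρ M t x l :=
  mul_pos (Real.exp_pos _) (by nlinarith [sq_nonneg x])

lemma barrier_hasNetworkDerivs {ι : Type*} (T R K ρ M : ℝ) :
    HasNetworkDerivs T R K (fun _ : ι => barrier K ρ M) (fun _ t x l => ρ * barrier K ρ M t x l)
      (fun _ t x _ => Real.exp (ρ * t) * (2 * x)) (fun _ t _ _ => Real.exp (ρ * t) * 2)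
      (fun t _ => -Real.exp (ρ * t)) where
  junction_eq _ _ _ _ _ _ := rfl
  continuousOn _ := by unfold barrier; fun_prop
  hasDerivAt_t _ t _ x _ l _ :=
    (((hasDerivAt_id t).const_mul ρ).exp.mul_const (x ^ 2 + (K - l) + M)).congr_deriv (by
      simp only [barrier, id_eq]
      ring)
  hasDerivWithinAt_x _ t _ x _ l _ := by
    simpa [barrier] using ((((hasDerivAt_id x).pow 2).add_const (K - l)).add_const M).const_mul
      (Real.exp (ρ * t)) |>.hasDerivWithinAt
  hasDerivAt_xx _ t _ x _ l _ := by
    simpa using ((hasDerivAt_id x).const_mul 2).const_mul (Real.exp (ρ * t))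
  hasDerivAt_l _ t _ l _ := by
    simpa [barrier] using (((hasDerivAt_id l).const_sub K).add_const M).const_mul (Real.exp (ρ * t))

section MaximumPrinciple

variable {I : ℕ} {T R K A B C : ℝ} {a b c : Fin I → ℝ → ℝ → ℝ → ℝ} {αc : Fin I → ℝ → ℝ → ℝ}
  {r : ℝ → ℝ → ℝ} {w wt wx wxx : Fin I → ℝ → ℝ → ℝ → ℝ} {w0l : ℝ → ℝ → ℝ}

lemma barrier_strictSuperSol (hR : 0 < R)
    (ha : ∀ i, ∀ t ∈ Ioo 0 T, ∀ x ∈ Ioo 0 R, ∀ l ∈ Ioo 0 K, a i t x l ≤ A)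
    (hb : ∀ i, ∀ t ∈ Ioo 0 T, ∀ x ∈ Ioo 0 R, ∀ l ∈ Ioo 0 K, -B ≤ b i t x l)
    (hc : ∀ i, ∀ t ∈ Ioo 0 T, ∀ x ∈ Ioo 0 R, ∀ l ∈ Ioo 0 K, -C ≤ c i t x l)
    (hr : ∀ t ∈ Ioo 0 T, ∀ l ∈ Ioo 0 K, 0 ≤ r t l) {M : ℝ} (hM : 0 < M)
    (hABM : 2 * A + 2 * |B| * R < M) :
    StrictSuperSol I T R K a b c αc r (fun _ => barrier K (C + 1) M)
      (fun _ t x l => (C + 1) * barrier K (C + 1) M t x l)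
      (fun _ t x _ => Real.exp ((C + 1) * t) * (2 * x)) (fun _ t _ _ => Real.exp ((C + 1) * t) * 2)
      (fun t _ => -Real.exp ((C + 1) * t)) where
  interior i t ht x hx l hl := by
    have hbx : -(|B| * R) ≤ b i t x l * x := by
      have hB : -|B| ≤ b i t x l := (neg_le_neg (le_abs_self B)).trans (hb i t ht x hx l hl)
      nlinarith [hx.1, mul_nonneg (abs_nonneg B) (sub_nonneg.2 hx.2.le)]
    have hP : M ≤ (C + 1 + c i t x l) * (x ^ 2 + (K - l) + M) := by
      nlinarith [sq_nonneg x, hl.2, hc i t ht x hx l hl]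
    have hpos : 0 < (C + 1 + c i t x l) * (x ^ 2 + (K - l) + M) - 2 * a i t x l
        + 2 * (b i t x l * x) := by linarith [ha i t ht x hx l hl]
    unfold barrier
    linear_combination Real.exp ((C + 1) * t) * hpos
  junction _ t ht l hl := by
    have := mul_nonneg (hr t ht l hl) (barrier_pos (ρ := C + 1) (t := t) (x := 0) hM hl.2.le).le
    simp only [mul_zero, Finset.sum_const_zero, add_zero]
    linarith [Real.exp_pos ((C + 1) * t)]
  endpoint _ _ _ _ _ := by positivity

theorem SubSol.nonpos (hT : 0 < T) (hR : 0 < R) (hK : 0 < K)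
    (ha : ∀ i, ∀ t ∈ Ioo 0 T, ∀ x ∈ Ioo 0 R, ∀ l ∈ Ioo 0 K, 0 ≤ a i t x l)
    (ha_le : ∀ i, ∀ t ∈ Ioo 0 T, ∀ x ∈ Ioo 0 R, ∀ l ∈ Ioo 0 K, a i t x l ≤ A)
    (hb : ∀ i, ∀ t ∈ Ioo 0 T, ∀ x ∈ Ioo 0 R, ∀ l ∈ Ioo 0 K, -B ≤ b i t x l)
    (hc : ∀ i, ∀ t ∈ Ioo 0 T, ∀ x ∈ Ioo 0 R, ∀ l ∈ Ioo 0 K, -C ≤ c i t x l)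
    (hα : ∀ i, ∀ t ∈ Ioo 0 T, ∀ l ∈ Ioo 0 K, 0 ≤ αc i t l)
    (hr : ∀ t ∈ Ioo 0 T, ∀ l ∈ Ioo 0 K, 0 ≤ r t l)
    (hw : SubSol I T R K a b c 0 αc r 0 w wt wx wxx w0l)
    (hderiv : HasNetworkDerivs T R K w wt wx wxx w0l)
    (hinit : ∀ i, ∀ x ∈ Icc 0 R, ∀ l ∈ Icc 0 K, w i 0 x l ≤ 0)
    (hterm : ∀ i, ∀ t ∈ Icc 0 T, ∀ x ∈ Icc 0 R, w i t x K ≤ 0) :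
    ∀ i, ∀ t ∈ Icc 0 T, ∀ x ∈ Icc 0 R, ∀ l ∈ Icc 0 K, w i t x l ≤ 0 := by
  obtain ⟨M, hM⟩ := exists_gt (max 0 (2 * A + 2 * |B| * R))
  obtain ⟨hM_pos, hABM⟩ := max_lt_iff.1 hM
  have hopen := hw.nonpos_of_strictSuperSol hR ha hα hderiv
    (barrier_strictSuperSol hR ha_le hb hc hr hM_pos hABM)
    (barrier_hasNetworkDerivs T R K (C + 1) M)
    (fun _ _ _ _ _ _ hl => barrier_pos hM_pos hl.2) hinit hterm
  have hclosure : closure (Ioo 0 T ×ˢ Icc 0 R ×ˢ Ioo 0 K) = Icc 0 T ×ˢ Icc 0 R ×ˢ Icc 0 K := by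
    rw [closure_prod_eq, closure_prod_eq, closure_Ioo hT.ne, closure_Icc, closure_Ioo hK.ne]
  intro i t ht x hx l hl
  have hmem : (t, x, l) ∈ closure (Ioo 0 T ×ˢ Icc 0 R ×ˢ Ioo 0 K) := by
    rw [hclosure]
    exact ⟨ht, hx, hl⟩
  exact le_on_closure (f := fun p : ℝ × ℝ × ℝ => w i p.1 p.2.1 p.2.2) (g := fun _ => 0)
    (fun p hp => hopen i p.1 hp.1 p.2.1 hp.2.1 p.2.2 hp.2.2)
    (hclosure ▸ hderiv.continuousOn i) continuousOn_const hmem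

end MaximumPrinciple

theorem comparison_theorem_local_time_kirchhoff_general {I : ℕ} {T R K : ℝ}
    (hT : 0 < T) (hR : 0 < R) (hK : 0 < K)
    {a b c f : Fin I → ℝ → ℝ → ℝ → ℝ} {αc : Fin I → ℝ → ℝ → ℝ} {r φc : ℝ → ℝ → ℝ}
    (ha : ∀ i, ∀ t ∈ Ioo 0 T, ∀ x ∈ Ioo 0 R, ∀ l ∈ Ioo 0 K, 0 ≤ a i t x l)
    (ha_le : ∃ A, ∀ i, ∀ t ∈ Ioo 0 T, ∀ x ∈ Ioo 0 R, ∀ l ∈ Ioo 0 K, a i t x l ≤ A)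
    (hb : ∃ B, ∀ i, ∀ t ∈ Ioo 0 T, ∀ x ∈ Ioo 0 R, ∀ l ∈ Ioo 0 K, -B ≤ b i t x l)
    (hc : ∃ C, ∀ i, ∀ t ∈ Ioo 0 T, ∀ x ∈ Ioo 0 R, ∀ l ∈ Ioo 0 K, -C ≤ c i t x l)
    (hα : ∀ i, ∀ t ∈ Ioo 0 T, ∀ l ∈ Ioo 0 K, 0 ≤ αc i t l)
    (hr : ∀ t ∈ Ioo 0 T, ∀ l ∈ Ioo 0 K, 0 ≤ r t l)
    {u ut ux uxx v vt vx vxx : Fin I → ℝ → ℝ → ℝ → ℝ} {u0l v0l : ℝ → ℝ → ℝ}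
    (hu_deriv : HasNetworkDerivs T R K u ut ux uxx u0l)
    (hv_deriv : HasNetworkDerivs T R K v vt vx vxx v0l)
    (hu : SuperSol I T R K a b c f αc r φc u ut ux uxx u0l)
    (hv : SubSol I T R K a b c f αc r φc v vt vx vxx v0l)
    (hinit : ∀ i, ∀ x ∈ Icc 0 R, ∀ l ∈ Icc 0 K, v i 0 x l ≤ u i 0 x l)
    (hterm : ∀ i, ∀ t ∈ Icc 0 T, ∀ x ∈ Icc 0 R, v i t x K ≤ u i t x K) :
    ∀ i, ∀ t ∈ Icc 0 T, ∀ x ∈ Icc 0 R, ∀ l ∈ Icc 0 K, v i t x l ≤ u i t x l := by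
  obtain ⟨A, hA⟩ := ha_le
  obtain ⟨B, hB⟩ := hb
  obtain ⟨C, hC⟩ := hc
  intro i t ht x hx l hl
  exact sub_nonpos.1 <| (hv.sub_superSol hu).nonpos hT hR hK ha hA hB hC hα hr
    (hv_deriv.sub hu_deriv) (fun i x hx l hl => sub_nonpos.2 (hinit i x hx l hl))
    (fun i t ht x hx => sub_nonpos.2 (hterm i t ht x hx)) i t ht x hx l hl

/-- **Theorem 2.8 (Comparison theorem)**: under assumption (H), a super solution `u` and
a sub solution `v` of the local-time Kirchhoff system in the class `𝔠^{1,2,0}_{0}(Ω_T)`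
satisfying `v ≤ u` at `t = 0` and at `l = K` satisfy `v ≤ u` everywhere. -/
theorem comparison_theorem_local_time_kirchhoff
    (I : ℕ) (hI : 2 ≤ I) (T R K al αl : ℝ)
    (hT : 0 < T) (hR : 0 < R) (hK : 0 < K) (hal : 0 < al) (hαl : 0 < αl)
    (a b c f : Fin I → ℝ → ℝ → ℝ → ℝ) (αc : Fin I → ℝ → ℝ → ℝ) (r φc : ℝ → ℝ → ℝ)
    -- assumption (H): W^{1,∞} regularity, nonnegativity of r, ellipticity
    (hHa : LB3 I T R K a) (hHb : LB3 I T R K b) (hHc : LB3 I T R K c)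
    (hHf : LB3 I T R K f) (hHα : LB2I I T K αc) (hHr : LB2 T K r) (hHφ : LB2 T K φc)
    (hrpos : ∀ t ∈ Icc (0:ℝ) T, ∀ l ∈ Icc (0:ℝ) K, 0 ≤ r t l)
    (hella : ∀ i, ∀ t ∈ Icc (0:ℝ) T, ∀ x ∈ Icc (0:ℝ) R, ∀ l ∈ Icc (0:ℝ) K,
      al ≤ a i t x l)
    (hellα : ∀ i, ∀ t ∈ Icc (0:ℝ) T, ∀ l ∈ Icc (0:ℝ) K, αl ≤ αc i t l)
    -- the super solution u and the sub solution v with their derivative data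
    (u ut ux uxx : Fin I → ℝ → ℝ → ℝ → ℝ) (u0l : ℝ → ℝ → ℝ)
    (v vt vx vxx : Fin I → ℝ → ℝ → ℝ → ℝ) (v0l : ℝ → ℝ → ℝ)
    (hclassu : InClassC120 I T R K u ut ux uxx u0l)
    (hclassv : InClassC120 I T R K v vt vx vxx v0l)
    (hsuper : SuperSol I T R K a b c f αc r φc u ut ux uxx u0l)
    (hsub : SubSol I T R K a b c f αc r φc v vt vx vxx v0l)
    (hinit : ∀ i, ∀ x ∈ Icc (0:ℝ) R, ∀ l ∈ Icc (0:ℝ) K, v i 0 x l ≤ u i 0 x l)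
    (hterm : ∀ i, ∀ t ∈ Icc (0:ℝ) T, ∀ x ∈ Icc (0:ℝ) R, v i t x K ≤ u i t x K) :
    ∀ i, ∀ t ∈ Icc (0:ℝ) T, ∀ x ∈ Icc (0:ℝ) R, ∀ l ∈ Icc (0:ℝ) K,
      v i t x l ≤ u i t x l := by
  exact comparison_theorem_local_time_kirchhoff_general hT hR hK
    (fun i t ht x hx l hl => hal.le.trans (hella i t (Ioo_subset_Icc_self ht) x
      (Ioo_subset_Icc_self hx) l (Ioo_subset_Icc_self hl)))
    (hHa.exists_abs_le.imp fun _ h i t ht x hx l hl => le_of_abs_le (h i t ht x hx l hl))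
    (hHb.exists_abs_le.imp fun _ h i t ht x hx l hl => neg_le_of_abs_le (h i t ht x hx l hl))
    (hHc.exists_abs_le.imp fun _ h i t ht x hx l hl => neg_le_of_abs_le (h i t ht x hx l hl))
    (fun i t ht l hl => hαl.le.trans (hellα i t (Ioo_subset_Icc_self ht) l
      (Ioo_subset_Icc_self hl)))
    (fun t ht l hl => hrpos t (Ioo_subset_Icc_self ht) l (Ioo_subset_Icc_self hl))
    hclassu.hasNetworkDerivs hclassv.hasNetworkDerivs hsuper hsub hinit hterm
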